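/- For arbitrary nonzero q½, t½: Rad is an A-submodule of V; in the quotient V' = V/Rad, for every μ ∈ ℂ the eigenspace ker(Ȳ − μ) of the operator Ȳ induced by Y is at most one-dimensional; and if E ∈ V is such that its image in V' is a nonzero eigenvector of Ȳ, then ev(E) ≠ 0. -/

import Mathlib

noncomputable section

/-- `V = ℂ[X, X⁻¹]`, the space of complex Laurent polynomials. -/
abbrev V : Type := LaurentPolynomial ℂ

/-- The monomial `X ^ m`. -/
def Xm (m : ℤ) : V := LaurentPolynomial.T m

/-- The radical of the duality pairing. -/
def Rad (pair : V →ₗ[ℂ] V →ₗ[ℂ] ℂ) : Submodule ℂ V := LinearMap.ker pair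

/-!
The algebra relations make `X` and `Y⁻¹` adjoint for the pairing, and `1` generates `V` under the
powers of `X`. Inductions along these powers show that `T` is self-adjoint and that `π` is adjoint
to `X T`, hence that `Y⁻¹` is adjoint to `X` and that the pairing is symmetric. The existence of
adjoints makes the radical a submodule. If `Y E ≡ μ E` modulo the radical, then symmetry gives
`{f, E} = {X f, Y E} = μ {X f, E}` for all `f`, so `{·, E}` is determined by `{1, E} = ev E`: it
vanishes as soon as `ev E = 0`. Therefore the evaluation is injective on each eigenspace of `Ȳ`.
-/

section LinearAlgebra

variable {K M : Type*} [Field K] [AddCommGroup M] [Module K M]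

theorem exists_eq_smul_of_eigenvector {f : M →ₗ[K] M} {φ : M →ₗ[K] K} {μ : K}
    (hφ : ∀ u, f u = μ • u → φ u = 0 → u = 0) {v w : M}
    (hv : f v = μ • v) (hw : f w = μ • w) (hv0 : v ≠ 0) : ∃ d : K, w = d • v := by
  have hφv : φ v ≠ 0 := fun h => hv0 (hφ v hv h)
  refine ⟨φ w / φ v, sub_eq_zero.1 (hφ _ ?_ ?_)⟩
  · rw [map_sub, map_smul, hv, hw, smul_sub, smul_comm]
  · rw [map_sub, map_smul, smul_eq_mul, div_mul_cancel₀ _ hφv, sub_self]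

end LinearAlgebra

/-- A module over the double affine Hecke algebra of type `A₁`, given by the action of its
generators `T`, `π` and `X`. The parameters `q` and `t` stand for the square roots `q½` and `t½`. -/
structure DAHAModule {K : Type*} [Field K] (q t : K) (M : Type*) [AddCommGroup M] [Module K M] where
  T : M ≃ₗ[K] M
  π : M ≃ₗ[K] M
  X : M ≃ₗ[K] M
  q_ne_zero : q ≠ 0
  t_ne_zero : t ≠ 0
  T_T : ∀ f, T (T f) = (t - t⁻¹) • T f + f
  T_X_T : ∀ f, T (X (T f)) = X.symm f
  π_π : ∀ f, π (π f) = f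
  π_X : ∀ f, π (X f) = q • X.symm (π f)

namespace DAHAModule

variable {K M P : Type*} [Field K] [AddCommGroup M] [Module K M] [AddCommGroup P] [Module K P]
  {q t : K} (A : DAHAModule q t M)

/-- The difference operator `Y = π ∘ T`. -/
def Y : M ≃ₗ[K] M := A.T.trans A.π

theorem Y_apply (f : M) : A.Y f = A.π (A.T f) := rfl

theorem T_symm_apply (f : M) : A.T.symm f = A.T f - (t - t⁻¹) • f := by
  rw [LinearEquiv.symm_apply_eq, map_sub, map_smul, A.T_T, add_sub_cancel_left]

theorem π_symm_apply (f : M) : A.π.symm f = A.π f := by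
  rw [LinearEquiv.symm_apply_eq, A.π_π]

theorem T_X (f : M) : A.T (A.X f) = A.X.symm (A.T.symm f) := by
  rw [← A.T_X_T, LinearEquiv.apply_symm_apply]

theorem X_T (f : M) : A.X (A.T f) = A.T.symm (A.X.symm f) := by
  rw [LinearEquiv.eq_symm_apply, A.T_X_T]

theorem Y_symm_apply (f : M) : A.Y.symm f = A.T.symm (A.π f) := by
  rw [← A.π_symm_apply]; rfl

theorem T_symm_Y (f : M) : A.T.symm (A.Y f) = A.Y.symm (A.T f) := by
  rw [A.Y_symm_apply, A.Y_apply]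

theorem Y_symm_X_T (f : M) : A.Y.symm (A.X (A.T f)) = q • A.X (A.T (A.Y f)) := by
  rw [A.Y_symm_apply, A.π_X, map_smul, A.X_T, A.Y_apply]

/-- A vector `v` that generates the polynomial representation: it spans the one-dimensional
representation `T ↦ t½`, `π ↦ 1`, and it is cyclic under the powers `Xᵐ`, `m ∈ ℤ`, where stability
under both `X` and `X⁻¹` is expressed by an equivalence. -/
structure IsSphericalGenerator (v : M) : Prop where
  T_apply : A.T v = t • v
  π_apply : A.π v = v
  eq_top : ∀ N : Submodule K M, v ∈ N → (∀ f, A.X f ∈ N ↔ f ∈ N) → N = ⊤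

/-- A duality pairing `B = {·, ·}` with evaluation `ev = B v`. It is pinned down by requiring that
`X` is adjoint to `Y⁻¹` and that `ev ∘ X = t⁻½ ev`. -/
structure IsDualityPairing (v : M) (B : M →ₗ[K] M →ₗ[K] K) : Prop
    extends A.IsSphericalGenerator v where
  X_left : ∀ f g, B (A.X f) g = B f (A.Y.symm g)
  gen_X : ∀ g, B v (A.X g) = t⁻¹ * B v g

variable {A} {v : M} {B : M →ₗ[K] M →ₗ[K] K}

theorem IsSphericalGenerator.hom_ext (hv : A.IsSphericalGenerator v) {L L' : M →ₗ[K] P}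
    (h : L v = L' v) (hX : ∀ f, L (A.X f) = L' (A.X f) ↔ L f = L' f) : L = L' :=
  LinearMap.eqLocus_eq_top.1 (hv.eq_top _ h hX)

theorem IsSphericalGenerator.Y_symm_apply (hv : A.IsSphericalGenerator v) :
    A.Y.symm v = t⁻¹ • v := by
  rw [LinearEquiv.symm_apply_eq, map_smul, A.Y_apply, hv.T_apply, map_smul, hv.π_apply,
    inv_smul_smul₀ A.t_ne_zero]

namespace IsDualityPairing

theorem X_symm_left (hB : A.IsDualityPairing v B) (f g : M) :
    B (A.X.symm f) g = B f (A.Y g) := by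
  simpa using (hB.X_left (A.X.symm f) (A.Y g)).symm

theorem gen_X_symm (hB : A.IsDualityPairing v B) (g : M) : B v (A.X.symm g) = t * B v g := by
  rw [← mul_inv_cancel_left₀ A.t_ne_zero (B v (A.X.symm g)), ← hB.gen_X,
    LinearEquiv.apply_symm_apply]

theorem gen_T (hB : A.IsDualityPairing v B) (g : M) : B v (A.T g) = t * B v g := by
  suffices B v ∘ₗ A.T.toLinearMap = t • B v from LinearMap.congr_fun this g
  have ht := A.t_ne_zero
  refine hB.hom_ext (by simp [hB.T_apply]) fun f => ?_
  simp only [LinearMap.comp_apply, LinearEquiv.coe_coe, LinearMap.smul_apply, smul_eq_mul,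
    A.T_X, hB.gen_X_symm, hB.gen_X, A.T_symm_apply, map_sub, map_smul]
  have hquad : B v f + (t - t⁻¹) * (t * B v f) = t * (t * B v f) := by
    field_simp
    ring
  rw [mul_inv_cancel_left₀ ht, sub_eq_iff_eq_add, hquad, mul_right_inj' ht]

theorem T_left (hB : A.IsDualityPairing v B) (f g : M) : B (A.T f) g = B f (A.T g) := by
  suffices B ∘ₗ A.T.toLinearMap = B.compl₂ A.T.toLinearMap from LinearMap.congr_fun₂ this f g
  refine hB.hom_ext (by ext g; simp [hB.T_apply, hB.gen_T]) fun f => ?_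
  simp only [LinearMap.ext_iff, LinearMap.comp_apply, LinearEquiv.coe_coe, LinearMap.compl₂_apply]
  calc (∀ g, B (A.T (A.X f)) g = B (A.X f) (A.T g))
    _ ↔ ∀ g, B (A.T.symm f) (A.Y g) = B f (A.T.symm (A.Y g)) := by
      simp only [A.T_X, hB.X_symm_left, hB.X_left, A.T_symm_Y]
    _ ↔ ∀ g, B (A.T.symm f) g = B f (A.T.symm g) :=
      ⟨fun h g => by simpa using h (A.Y.symm g), fun h g => h (A.Y g)⟩
    _ ↔ ∀ g, B (A.T f) g = B f (A.T g) := by simp [A.T_symm_apply]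

theorem π_left (hB : A.IsDualityPairing v B) (f g : M) :
    B (A.π f) g = B f (A.X (A.T g)) := by
  suffices B ∘ₗ A.π.toLinearMap = B.compl₂ (A.X.toLinearMap ∘ₗ A.T.toLinearMap) from
    LinearMap.congr_fun₂ this f g
  refine hB.hom_ext (by ext g; simp [hB.π_apply, hB.gen_X, hB.gen_T, A.t_ne_zero]) fun f => ?_
  simp only [LinearMap.ext_iff, LinearMap.comp_apply, LinearEquiv.coe_coe, LinearMap.compl₂_apply]
  calc (∀ g, B (A.π (A.X f)) g = B (A.X f) (A.X (A.T g)))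
    _ ↔ ∀ g, B (A.π f) (A.Y g) = B f (A.X (A.T (A.Y g))) := by
      simp [A.π_X, hB.X_symm_left, hB.X_left, A.Y_symm_X_T, A.q_ne_zero]
    _ ↔ ∀ g, B (A.π f) g = B f (A.X (A.T g)) :=
      ⟨fun h g => by simpa using h (A.Y.symm g), fun h g => h (A.Y g)⟩

theorem Y_left (hB : A.IsDualityPairing v B) (f g : M) : B (A.Y f) g = B f (A.X.symm g) := by
  rw [A.Y_apply, hB.π_left, hB.T_left, A.T_X_T]

theorem Y_symm_left (hB : A.IsDualityPairing v B) (f g : M) :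
    B (A.Y.symm f) g = B f (A.X g) := by
  simpa using (hB.Y_left (A.Y.symm f) (A.X g)).symm

theorem apply_gen (hB : A.IsDualityPairing v B) (f : M) : B f v = B v f := by
  suffices B.flip v = B v from LinearMap.congr_fun this f
  refine hB.hom_ext rfl fun f => ?_
  simp [hB.X_left, hB.gen_X, hB.Y_symm_apply, A.t_ne_zero]

theorem flip_eq (hB : A.IsDualityPairing v B) : B.flip = B := by
  refine hB.hom_ext (LinearMap.ext hB.apply_gen) fun f => ?_
  simp only [LinearMap.ext_iff, LinearMap.flip_apply, hB.X_left, ← hB.Y_symm_left]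
  exact ⟨fun h g => by simpa using h (A.Y g), fun h g => h (A.Y.symm g)⟩

theorem symm (hB : A.IsDualityPairing v B) (f g : M) : B f g = B g f :=
  LinearMap.congr_fun₂ hB.flip_eq g f

theorem T_mem_ker (hB : A.IsDualityPairing v B) {f : M} (hf : f ∈ B.ker) : A.T f ∈ B.ker :=
  LinearMap.ext fun g => by rw [hB.T_left, LinearMap.mem_ker.1 hf]; rfl

theorem π_mem_ker (hB : A.IsDualityPairing v B) {f : M} (hf : f ∈ B.ker) : A.π f ∈ B.ker :=
  LinearMap.ext fun g => by rw [hB.π_left, LinearMap.mem_ker.1 hf]; rfl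

theorem X_mem_ker (hB : A.IsDualityPairing v B) {f : M} (hf : f ∈ B.ker) : A.X f ∈ B.ker :=
  LinearMap.ext fun g => by rw [hB.X_left, LinearMap.mem_ker.1 hf]; rfl

theorem ker_le_comap_Y (hB : A.IsDualityPairing v B) : B.ker ≤ B.ker.comap A.Y.toLinearMap :=
  fun _ hf => hB.π_mem_ker (hB.T_mem_ker hf)

theorem gen_eq_zero_of_mem_ker (hB : A.IsDualityPairing v B) {f : M} (hf : f ∈ B.ker) :
    B v f = 0 := by
  rw [hB.symm, LinearMap.mem_ker.1 hf, LinearMap.zero_apply]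

theorem apply_eq_mul_X (hB : A.IsDualityPairing v B) {E : M} {μ : K}
    (hE : A.Y E - μ • E ∈ B.ker) (f : M) : B f E = μ * B (A.X f) E := by
  have h : B (A.X f) (A.Y E - μ • E) = 0 := by
    rw [hB.symm, LinearMap.mem_ker.1 hE, LinearMap.zero_apply]
  rwa [map_sub, map_smul, hB.X_left, LinearEquiv.symm_apply_apply, smul_eq_mul, sub_eq_zero] at h

theorem mem_ker_of_gen_eq_zero (hB : A.IsDualityPairing v B) {E : M} {μ : K}
    (hE : A.Y E - μ • E ∈ B.ker) (hvE : B v E = 0) : E ∈ B.ker := by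
  rw [LinearMap.mem_ker, ← hB.flip_eq]
  rcases eq_or_ne μ 0 with rfl | hμ
  · exact LinearMap.ext fun f => by simpa using hB.apply_eq_mul_X hE f
  · refine hB.hom_ext (by simpa using hvE) fun f => ?_
    simp [hB.apply_eq_mul_X hE f, hμ]

/-- The evaluation `B v` on the quotient by the radical. -/
def quotientEval (hB : A.IsDualityPairing v B) : (M ⧸ B.ker) →ₗ[K] K :=
  B.ker.liftQ (B v) fun _ hf => hB.gen_eq_zero_of_mem_ker hf

theorem eq_zero_of_quotientEval_eq_zero (hB : A.IsDualityPairing v B) {μ : K} (u : M ⧸ B.ker)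
    (hu : B.ker.mapQ B.ker A.Y.toLinearMap hB.ker_le_comap_Y u = μ • u)
    (h0 : hB.quotientEval u = 0) : u = 0 := by
  obtain ⟨E, rfl⟩ := B.ker.mkQ_surjective u
  rw [← map_smul] at hu
  exact (Submodule.Quotient.mk_eq_zero _).2
    (hB.mem_ker_of_gen_eq_zero ((Submodule.Quotient.eq _).1 hu) h0)

end IsDualityPairing

end DAHAModule

section Laurent

open LaurentPolynomial

section Semiring

variable {R M : Type*} [CommSemiring R] [AddCommMonoid M] [Module R M]

theorem eq_top_of_one_mem_of_T_mul_mem_iff {N : Submodule R R[T;T⁻¹]} (h1 : 1 ∈ N)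
    (hT : ∀ f, T 1 * f ∈ N ↔ f ∈ N) : N = ⊤ := by
  have hmem (m : ℤ) : (T m : R[T;T⁻¹]) ∈ N := by
    induction m using Int.induction_on with
    | zero => rwa [T_zero]
    | succ i ih => rwa [add_comm, T_add, hT]
    | pred i ih => rwa [← hT, ← T_add, add_sub_cancel]
  refine (Submodule.eq_top_iff').2 fun f => ?_
  induction f using LaurentPolynomial.induction_on' with
  | add f g hf hg => exact N.add_mem hf hg
  | C_mul_T n a => exact smul_eq_C_mul a (T n) ▸ N.smul_mem a (hmem n)

theorem apply_T_mul_of_apply_T_add {L : R[T;T⁻¹] →ₗ[R] M} {U : M →ₗ[R] M} {n : ℤ}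
    (h : ∀ m, L (T (n + m)) = U (L (T m))) (f : R[T;T⁻¹]) : L (T n * f) = U (L f) := by
  suffices L ∘ₗ LinearMap.mulLeft R (T n) = U ∘ₗ L from LinearMap.congr_fun this f
  ext m : 2
  simp [-T_mul, ← T_add, h]

theorem pairing_one_eq_eval {ev : R[T;T⁻¹] →ₗ[R] R} {Yz : ℤ → R[T;T⁻¹] →ₗ[R] R[T;T⁻¹]}
    {B : R[T;T⁻¹] →ₗ[R] R[T;T⁻¹] →ₗ[R] R} (hYz0 : Yz 0 = LinearMap.id)
    (hB : ∀ m g, B (T m) g = ev (Yz (-m) g)) : B 1 = ev := by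
  ext m
  simpa [hYz0] using hB 0 (T m)

end Semiring

theorem T_two_sub_one_ne_zero {R : Type*} [Ring R] [Nontrivial R] :
    (T 2 - 1 : R[T;T⁻¹]) ≠ 0 := fun h => by
  have hdeg := congrArg degree ((sub_eq_zero.1 h).trans T_zero.symm)
  simp only [degree_T] at hdeg
  norm_num at hdeg

variable {K : Type*} [Field K]

/-- `L` is the Demazure–Lusztig operator `t½ s + (t½ - t⁻½) (X² - 1)⁻¹ (s - 1)` with `t` standing
for `t½`, the denominator `X² - 1` being cleared. -/
def IsDemazureLusztig (t : K) (L : K[T;T⁻¹] →ₗ[K] K[T;T⁻¹]) : Prop :=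
  ∀ f, (T 2 - 1) * L f = t • ((T 2 - 1) * invert f) + (t - t⁻¹) • (invert f - f)

namespace IsDemazureLusztig

variable {t : K} {L : K[T;T⁻¹] →ₗ[K] K[T;T⁻¹]}

theorem apply_one (hL : IsDemazureLusztig t L) : L 1 = t • 1 := by
  refine mul_left_cancel₀ T_two_sub_one_ne_zero ?_
  rw [hL, map_one, sub_self, smul_zero, add_zero, mul_smul_comm]

theorem apply_T_mul (hL : IsDemazureLusztig t L) (f : K[T;T⁻¹]) :
    L (T 1 * f) = T (-1) * (L f - (t - t⁻¹) • f) := by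
  refine mul_left_cancel₀ T_two_sub_one_ne_zero ?_
  have hT : (T 1 : K[T;T⁻¹]) = T (-1) * T 2 := by rw [← T_add]; rfl
  have hf := hL f
  have hTf := hL (T 1 * f)
  simp only [map_mul, invert_T, smul_eq_C_mul] at hf hTf ⊢
  linear_combination hTf - T (-1) * hf - C (t - t⁻¹) * f * hT

theorem apply_apply (hL : IsDemazureLusztig t L) (ht : t ≠ 0) (f : K[T;T⁻¹]) :
    L (L f) = (t - t⁻¹) • L f + f := by
  -- Inverting the defining relation at `f` gives `(X² - 1) * s (L f)`, from which `L (L f)` can be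
  -- computed once the denominator has been cleared twice.
  refine mul_left_cancel₀ T_two_sub_one_ne_zero (mul_left_cancel₀ T_two_sub_one_ne_zero ?_)
  have hT : (T 2 * T (-2) : K[T;T⁻¹]) = 1 := by rw [← T_add]; rfl
  have hct : (C t * C t - C (t - t⁻¹) * C t : K[T;T⁻¹]) = 1 := by
    rw [← map_mul, ← map_mul, ← map_sub, ← C.map_one]
    congr 1
    field_simp
    ring
  have hf := hL f
  have hLf := hL (L f)
  have hinv := congrArg invert hf
  generalize t - t⁻¹ = c at hct hf hLf hinv ⊢
  simp only [smul_eq_C_mul, map_add, map_sub, map_mul, invert_T, invert_C, map_one,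
    involutive_invert f] at hf hinv hLf ⊢
  linear_combination (T 2 - 1) * hLf - C c * T 2 * hf
    - (C t * (T 2 - 1) + C c) * T 2 * hinv
    + (C t * (T 2 - 1) + C c) * (invert (L f) - C t * f) * hT
    + (T 2 - 1) ^ 2 * f * hct

end IsDemazureLusztig

variable {q t : K} {L P : K[T;T⁻¹] →ₗ[K] K[T;T⁻¹]}

theorem comp_self_eq_id_of_apply_T (hq : q ≠ 0) (hP : ∀ m, P (T m) = q ^ m • T (-m)) :
    P ∘ₗ P = LinearMap.id := by
  ext m : 2
  simp [hP, smul_smul, mul_inv_cancel₀ (zpow_ne_zero m hq)]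

theorem apply_T_mul_of_apply_T (hq : q ≠ 0) (hP : ∀ m, P (T m) = q ^ m • T (-m)) (f : K[T;T⁻¹]) :
    P (T 1 * f) = q • (T (-1) * P f) := by
  let U : K[T;T⁻¹] →ₗ[K] K[T;T⁻¹] := q • LinearMap.mulLeft K (T (-1))
  refine apply_T_mul_of_apply_T_add (U := U) (fun m => ?_) f
  simp only [U, hP, LinearMap.smul_apply, LinearMap.mulLeft_apply, mul_smul_comm, ← T_add,
    smul_smul, zpow_add₀ hq, zpow_one, neg_add]

variable (hq : q ≠ 0) (ht : t ≠ 0) (hL : IsDemazureLusztig t L)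
  (hP : ∀ m, P (T m) = q ^ m • T (-m))

/-- The polynomial representation on `K[X, X⁻¹]`, built from a Demazure–Lusztig operator `L` and
the operator `P : f(X) ↦ f(q½ X⁻¹)`. -/
def polynomialRep : DAHAModule q t K[T;T⁻¹] where
  T := .ofLinearMap L (L - (t - t⁻¹) • LinearMap.id)
    (LinearMap.ext fun f => by simp [hL.apply_apply ht])
    (LinearMap.ext fun f => by simp [hL.apply_apply ht])
  π := .ofLinearMap P P (comp_self_eq_id_of_apply_T hq hP) (comp_self_eq_id_of_apply_T hq hP)
  X := .ofLinearMap (LinearMap.mulLeft K (T 1)) (LinearMap.mulLeft K (T (-1)))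
    (LinearMap.ext fun f => by simp [-T_mul, ← mul_assoc, ← T_add])
    (LinearMap.ext fun f => by simp [-T_mul, ← mul_assoc, ← T_add])
  q_ne_zero := hq
  t_ne_zero := ht
  T_T := hL.apply_apply ht
  T_X_T f := show L (T 1 * L f) = T (-1) * f by
    rw [hL.apply_T_mul, hL.apply_apply ht, add_sub_cancel_left]
  π_π := LinearMap.congr_fun (comp_self_eq_id_of_apply_T hq hP)
  π_X := apply_T_mul_of_apply_T hq hP

theorem isSphericalGenerator_one : (polynomialRep hq ht hL hP).IsSphericalGenerator 1 where
  T_apply := hL.apply_one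
  π_apply := show P 1 = 1 by simpa using hP 0
  eq_top _ := eq_top_of_one_mem_of_T_mul_mem_iff

theorem isDualityPairing_one {ev : K[T;T⁻¹] →ₗ[K] K} {Yz : ℤ → K[T;T⁻¹] →ₗ[K] K[T;T⁻¹]}
    {B : K[T;T⁻¹] →ₗ[K] K[T;T⁻¹] →ₗ[K] K} (hev : ∀ m, ev (T m) = t ^ (-m))
    (hYz0 : Yz 0 = LinearMap.id) (hYz1 : Yz 1 = P ∘ₗ L)
    (hYzadd : ∀ a b, Yz (a + b) = Yz a ∘ₗ Yz b) (hB : ∀ m g, B (T m) g = ev (Yz (-m) g)) :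
    (polynomialRep hq ht hL hP).IsDualityPairing 1 B where
  toIsSphericalGenerator := isSphericalGenerator_one hq ht hL hP
  X_left f g := by
    have hY : (polynomialRep hq ht hL hP).Y.symm g = Yz (-1) g := by
      have h := LinearMap.congr_fun (hYzadd 1 (-1)) g
      rw [add_neg_cancel, hYz0, hYz1] at h
      exact (LinearEquiv.symm_apply_eq _).2 h
    have hX : B (T 1 * f) = LinearMap.lcomp K K (Yz (-1)) (B f) :=
      apply_T_mul_of_apply_T_add (fun m => LinearMap.ext fun k => by
        rw [LinearMap.lcomp_apply, hB, hB, neg_add_rev, hYzadd, LinearMap.comp_apply]) f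
    exact (LinearMap.congr_fun hX g).trans (congrArg (B f) hY.symm)
  gen_X g := by
    rw [pairing_one_eq_eval hYz0 hB]
    refine apply_T_mul_of_apply_T_add (U := t⁻¹ • (LinearMap.id : K →ₗ[K] K)) (fun m => ?_) g
    simp [hev, zpow_add₀ ht, mul_comm]

theorem stmt7_general
    {q2 t2 : K} (hq2 : q2 ≠ 0) (ht2 : t2 ≠ 0)
    {S Top Pi Y : K[T;T⁻¹] →ₗ[K] K[T;T⁻¹]}
    (hS : ∀ m : ℤ, S (T m) = T (-m))
    (hPi : ∀ m : ℤ, Pi (T m) = q2 ^ m • T (-m))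
    (hT : ∀ f, (T 2 - 1) * Top f = t2 • ((T 2 - 1) * S f) + (t2 - t2⁻¹) • (S f - f))
    (hY : Y = Pi ∘ₗ Top)
    {ev : K[T;T⁻¹] →ₗ[K] K} (hev : ∀ m : ℤ, ev (T m) = t2 ^ (-m))
    {Yz : ℤ → K[T;T⁻¹] →ₗ[K] K[T;T⁻¹]}
    (hYz0 : Yz 0 = LinearMap.id) (hYz1 : Yz 1 = Y)
    (hYzadd : ∀ a b : ℤ, Yz (a + b) = Yz a ∘ₗ Yz b)
    {pair : K[T;T⁻¹] →ₗ[K] K[T;T⁻¹] →ₗ[K] K}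
    (hpair : ∀ (m : ℤ) (g : K[T;T⁻¹]), pair (T m) g = ev (Yz (-m) g)) :
    (∀ f ∈ pair.ker, Top f ∈ pair.ker ∧ Pi f ∈ pair.ker ∧ T 1 * f ∈ pair.ker) ∧
    ∃ hY' : pair.ker ≤ pair.ker.comap Y,
      (∀ (c : K) (v w : K[T;T⁻¹] ⧸ pair.ker),
          pair.ker.mapQ pair.ker Y hY' v = c • v →
          pair.ker.mapQ pair.ker Y hY' w = c • w →
          v ≠ 0 → ∃ d : K, w = d • v) ∧
      (∀ E : K[T;T⁻¹], pair.ker.mkQ E ≠ 0 →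
        (∃ c : K, pair.ker.mapQ pair.ker Y hY' (pair.ker.mkQ E) = c • pair.ker.mkQ E) →
        ev E ≠ 0) := by
  subst hY
  have hL : IsDemazureLusztig t2 Top := fun f => by
    rw [hT, show S = invert.toLinearMap by ext m; simp [hS]]; rfl
  have hB := isDualityPairing_one hq2 ht2 hL hPi hev hYz0 hYz1 hYzadd hpair
  refine ⟨fun f hf => ⟨hB.T_mem_ker hf, hB.π_mem_ker hf, hB.X_mem_ker hf⟩, hB.ker_le_comap_Y,
    fun c v w => exists_eq_smul_of_eigenvector hB.eq_zero_of_quotientEval_eq_zero, ?_⟩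
  rintro E hE ⟨c, hc⟩ h0
  rw [← pairing_one_eq_eval hYz0 hpair] at h0
  exact hE (hB.eq_zero_of_quotientEval_eq_zero _ hc h0)

end Laurent

/-- for arbitrary nonzero `q½, t½`: `Rad` is an `A`-submodule of
`V`; in `V' = V/Rad` every eigenspace of the operator `Ȳ` induced by `Y` is at
most one-dimensional; and if the image of `E ∈ V` in `V'` is a nonzero
`Ȳ`-eigenvector then `ev(E) ≠ 0`. -/
theorem stmt7
    (q2 t2 : ℂ) (hq2 : q2 ≠ 0) (ht2 : t2 ≠ 0)
    (S Top Pi Y : V →ₗ[ℂ] V)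
    (hS : ∀ m : ℤ, S (Xm m) = Xm (-m))
    (hPi : ∀ m : ℤ, Pi (Xm m) = q2 ^ m • Xm (-m))
    (hT : ∀ f : V, (Xm 2 - 1) * Top f
        = t2 • ((Xm 2 - 1) * S f) + (t2 - t2⁻¹) • (S f - f))
    (hY : Y = Pi ∘ₗ Top)
    (ev : V →ₗ[ℂ] ℂ) (hev : ∀ m : ℤ, ev (Xm m) = t2 ^ (-m))
    (Yz : ℤ → V →ₗ[ℂ] V)
    (hYz0 : Yz 0 = LinearMap.id) (hYz1 : Yz 1 = Y)
    (hYzadd : ∀ a b : ℤ, Yz (a + b) = Yz a ∘ₗ Yz b)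
    (pair : V →ₗ[ℂ] V →ₗ[ℂ] ℂ)
    (hpair : ∀ (m : ℤ) (g : V), pair (Xm m) g = ev (Yz (-m) g))
    :
    (∀ f ∈ Rad pair, Top f ∈ Rad pair ∧ Pi f ∈ Rad pair ∧ Xm 1 * f ∈ Rad pair) ∧
    ∃ hY' : Rad pair ≤ (Rad pair).comap Y,
      (∀ (c : ℂ) (v w : V ⧸ Rad pair),
          (Rad pair).mapQ (Rad pair) Y hY' v = c • v →
          (Rad pair).mapQ (Rad pair) Y hY' w = c • w →
          v ≠ 0 → ∃ d : ℂ, w = d • v) ∧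
      (∀ E : V, (Rad pair).mkQ E ≠ 0 →
        (∃ c : ℂ, (Rad pair).mapQ (Rad pair) Y hY' ((Rad pair).mkQ E)
            = c • (Rad pair).mkQ E) →
        ev E ≠ 0) :=
  stmt7_general hq2 ht2 hS hPi hT hY hev hYz0 hYz1 hYzadd hpair
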